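/- Let μ be a positive Radon measure in ℝⁿ such that μ(L) = 0 for every hyperplane L orthogonal to one of the coordinate axes. Then a locally μ-integrable function f belongs to BMO(μ) if and only if there exists M ≥ 0 such that ∫_{{x ∈ Q : |f(x) − f_Q| > λ}} |f − f_Q| dμ ≤ (λ + M) · μ({x ∈ Q : |f(x) − f_Q| > λ}) for all axis-parallel cubes Q with μ(Q) > 0 and all λ ≥ 0. -/

import Mathlib

open MeasureTheory Set ENNReal

/-- The closed axis-parallel cube with corner `a` and side length `h`. -/
def cube {n : ℕ} (a : Fin n → ℝ) (h : ℝ) : Set (Fin n → ℝ) :=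
  {x | ∀ j, a j ≤ x j ∧ x j ≤ a j + h}

/-- The mean value `f_Q = ⨍_Q f dμ` of `f` over a set `Q`. -/
noncomputable def meanOn {X : Type*} [MeasurableSpace X] (μ : Measure X) (f : X → ℝ)
    (Q : Set X) : ℝ :=
  ⨍ y in Q, f y ∂μ

/-!
For the direct implication, let `K` be the supremum of the mean oscillations of `f`, fix a cube `Q`
and put `E = {|f - f_Q| > λ}`. On a cube `R` which is exactly half filled by `E`, the number `λ` is
a median of `|f - f_Q|`, so `∫_R (|f - f_Q| - λ)₊ ≤ ∫_R |f - f_R| ≤ 2 K μ(E ∩ R)`. If `E` fills at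
most half of `Q`, almost all of `E ∩ Q` is covered by such cubes `R ⊆ Q` with bounded overlap:
almost every point of `E` is a density point, so small balls around it are more than half filled,
and since hyperplanes are null, `μ` varies continuously as a ball grows to `Q` while being
translated so as to stay inside `Q`. Two disjoint balls which cross the same faces of `Q` remain
disjoint after this translation, so the Besicovitch covering theorem for balls, split according to
the crossed faces, bounds the overlap. The converse is the case `λ = 0`.
-/

open Filter Metric Topology

section Cube

variable {n : ℕ} {a x y : Fin n → ℝ} {h r s : ℝ}

lemma cube_eq_Icc (a : Fin n → ℝ) (h : ℝ) : cube a h = Icc a fun j => a j + h :=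
  ext fun _ => forall_and

lemma isCompact_cube (a : Fin n → ℝ) (h : ℝ) : IsCompact (cube a h) :=
  cube_eq_Icc a h ▸ isCompact_Icc

lemma measurableSet_cube (a : Fin n → ℝ) (h : ℝ) : MeasurableSet (cube a h) :=
  (isCompact_cube a h).measurableSet

lemma cube_mem_nhds (hx : x ∈ cube a h) (hlower : ∀ j, x j ≠ a j)
    (hupper : ∀ j, x j ≠ a j + h) : cube a h ∈ 𝓝 x :=
  cube_eq_Icc a h ▸ pi_Icc_mem_nhds (fun j => (hx j).1.lt_of_ne' (hlower j))
    fun j => (hx j).2.lt_of_ne (hupper j)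

lemma closedBall_eq_cube (x : Fin n → ℝ) (hr : 0 ≤ r) :
    closedBall x r = cube (fun j => x j - r) (2 * r) := by
  ext y
  simp only [closedBall_pi x hr, Real.closedBall_eq_Icc, mem_univ_pi, mem_Icc]
  exact forall_congr' fun j => and_congr_right' (by rw [show x j - r + 2 * r = x j + r by ring])

/-- The corner of the cube of side `2 * r` contained in `cube a h` whose centre is as close to `x`
as possible. -/
noncomputable def innerCorner (a : Fin n → ℝ) (h : ℝ) (x : Fin n → ℝ) (r : ℝ) : Fin n → ℝ :=
  fun j => max (a j) (min (x j - r) (a j + h - 2 * r))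

/-- The closed ball `closedBall x r`, which is a cube of side `2 * r`, translated by the least
amount that brings it inside `cube a h`. -/
noncomputable def innerCube (a : Fin n → ℝ) (h : ℝ) (x : Fin n → ℝ) (r : ℝ) : Set (Fin n → ℝ) :=
  cube (innerCorner a h x r) (2 * r)

lemma measurableSet_innerCube (a : Fin n → ℝ) (h : ℝ) (x : Fin n → ℝ) (r : ℝ) :
    MeasurableSet (innerCube a h x r) :=
  measurableSet_cube _ _

lemma continuous_innerCorner (a : Fin n → ℝ) (h : ℝ) (x : Fin n → ℝ) :
    Continuous (innerCorner a h x) := by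
  unfold innerCorner
  fun_prop

lemma innerCube_subset (hr : 2 * r ≤ h) : innerCube a h x r ⊆ cube a h := by
  refine fun y hy j => ⟨(le_max_left _ _).trans (hy j).1, (hy j).2.trans ?_⟩
  have : innerCorner a h x r j ≤ a j + h - 2 * r :=
    max_le (by linarith) (min_le_right _ _)
  linarith

lemma closedBall_inter_cube_subset_innerCube (hx : x ∈ cube a h) (hr : 0 ≤ r) :
    closedBall x r ∩ cube a h ⊆ innerCube a h x r := by
  rw [closedBall_eq_cube x hr]
  rintro y ⟨hyx, hya⟩ j
  have := hx j
  have := hyx j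
  have := hya j
  simp only [innerCorner]
  grind

lemma innerCube_eq_closedBall (hr : 0 ≤ r) (hsub : closedBall x r ⊆ cube a h) :
    innerCube a h x r = closedBall x r := by
  rw [closedBall_eq_cube x hr] at hsub ⊢
  have hlower : (fun j => x j - r) ∈ cube a h := hsub fun j => ⟨le_rfl, by linarith⟩
  have hupper : (fun j => x j + r) ∈ cube a h := hsub fun j => ⟨by linarith, by linarith⟩
  have : innerCorner a h x r = fun j => x j - r := by
    ext j
    rw [innerCorner, min_eq_left (by linarith [(hupper j).2]), max_eq_right (hlower j).1]
  rw [innerCube, this]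

lemma innerCube_half_side (a : Fin n → ℝ) (h : ℝ) (x : Fin n → ℝ) :
    innerCube a h x (h / 2) = cube a h := by
  have : innerCorner a h x (h / 2) = a := by
    ext j
    exact max_eq_left ((min_le_right _ _).trans (by linarith))
  rw [innerCube, this, mul_div_cancel₀ h two_ne_zero]

/-- The faces of `cube a h` that keep `innerCube a h x r` from being centred at `x`: coordinate `j`
is `-1` if `closedBall x r` crosses the lower face orthogonal to the `j`-th axis, `1` if it crosses
the upper face only, and `0` if it crosses neither. -/
noncomputable def crossedFaces (a : Fin n → ℝ) (h : ℝ) (x : Fin n → ℝ) (r : ℝ) : Fin n → SignType :=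
  fun j => if x j - r < a j then -1 else if a j + h < x j + r then 1 else 0

lemma exists_lt_dist_apply_of_disjoint_closedBall (hr : 0 ≤ r) (hs : 0 ≤ s)
    (hdisj : Disjoint (closedBall x r) (closedBall y s)) : ∃ j, r + s < |x j - y j| := by
  rw [disjoint_closedBall_closedBall_iff hr hs] at hdisj
  contrapose! hdisj
  exact (dist_pi_le_iff (add_nonneg hr hs)).2 hdisj

-- Two balls crossing the same face overlap in that coordinate, so disjoint balls with the same
-- crossed faces are separated in a coordinate in which neither of them is translated.
lemma disjoint_innerCube (hx : x ∈ cube a h) (hy : y ∈ cube a h) (hr : 0 ≤ r) (hs : 0 ≤ s)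
    (hface : crossedFaces a h x r = crossedFaces a h y s)
    (hdisj : Disjoint (closedBall x r) (closedBall y s)) :
    Disjoint (innerCube a h x r) (innerCube a h y s) := by
  obtain ⟨j, hj⟩ := exists_lt_dist_apply_of_disjoint_closedBall hr hs hdisj
  refine Set.disjoint_left.2 fun z hzx hzy => ?_
  have := hx j
  have := hy j
  have := hzx j
  have := hzy j
  have := congrFun hface j
  simp only [innerCorner, crossedFaces] at *
  rw [lt_abs] at hj
  split_ifs at * <;> grind

end Cube

section Covering

variable {n : ℕ} {a : Fin n → ℝ} {h : ℝ}

/-- Labels for the disjoint families into which a covering of a subset of `ℝⁿ` by inner cubes is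
split: a family of the Besicovitch covering theorem for balls, and a set of crossed faces. -/
abbrev CoverIndex (n : ℕ) : Type :=
  Fin (Besicovitch.multiplicity (Fin n → ℝ)) × (Fin n → SignType)

theorem exists_disjoint_innerCube_families {S : Set (Fin n → ℝ)} (hS : S ⊆ cube a h)
    {r : (Fin n → ℝ) → ℝ} (hr : ∀ x ∈ S, 0 < r x) (hrh : ∀ x ∈ S, 2 * r x ≤ h) :
    ∃ T : CoverIndex n → Set (Fin n → ℝ), (∀ p, T p ⊆ S) ∧ (∀ p, (T p).Countable) ∧
      (∀ p, (T p).PairwiseDisjoint fun x => innerCube a h x (r x)) ∧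
      S ⊆ ⋃ p, ⋃ x ∈ T p, innerCube a h x (r x) := by
  let balls : Besicovitch.BallPackage S (Fin n → ℝ) :=
    { c := (↑)
      r := fun x => r x
      rpos := fun x => hr x x.2
      r_bound := h / 2
      r_le := fun x => by linarith [hrh x x.2] }
  obtain ⟨s, hdisj, hcover⟩ := Besicovitch.exist_disjoint_covering_families
    (Besicovitch.one_lt_goodτ _) (Besicovitch.isEmpty_satelliteConfig_multiplicity _) balls
  have hcount (k) : (s k).Countable :=
    (hdisj k).countable_of_nonempty_interior fun x _ =>
      ⟨x, ball_subset_interior_closedBall (mem_ball_self (hr x x.2))⟩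
  refine ⟨fun p => (↑) '' {x | x ∈ s p.1 ∧ crossedFaces a h x (r x) = p.2}, ?_, ?_, ?_, ?_⟩
  · rintro p _ ⟨x, -, rfl⟩
    exact x.2
  · exact fun p => ((hcount p.1).mono fun x hx => hx.1).image _
  · rintro p _ ⟨x, ⟨hx, hxp⟩, rfl⟩ _ ⟨y, ⟨hy, hyp⟩, rfl⟩ hxy
    exact disjoint_innerCube (hS x.2) (hS y.2) (hr x x.2).le (hr y y.2).le (hxp.trans hyp.symm)
      (hdisj p.1 hx hy (ne_of_apply_ne _ hxy))
  · intro y hy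
    obtain ⟨k, x, hx, hyx⟩ : ∃ k, ∃ x ∈ s k, y ∈ ball x.1 (r x) := by
      simpa only [mem_iUnion, exists_prop] using hcover (mem_range_self (⟨y, hy⟩ : S))
    refine mem_iUnion.2 ⟨(k, crossedFaces a h x (r x)), mem_iUnion₂.2 ⟨x, ⟨x, ⟨hx, rfl⟩, rfl⟩, ?_⟩⟩
    exact closedBall_inter_cube_subset_innerCube (hS x.2) (hr x x.2).le
      ⟨ball_subset_closedBall hyx, hS hy⟩

end Covering

section Measure

variable {n : ℕ} {μ : Measure (Fin n → ℝ)} {a x : Fin n → ℝ} {h : ℝ} {E : Set (Fin n → ℝ)}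

lemma ae_forall_apply_ne (hμ : ∀ (j : Fin n) (t : ℝ), μ {x | x j = t} = 0) (b : Fin n → ℝ) :
    ∀ᵐ x ∂μ, ∀ j, x j ≠ b j :=
  ae_all_iff.2 fun j => by simpa [ae_iff] using hμ j (b j)

lemma ae_cube_mem_nhds (hμ : ∀ (j : Fin n) (t : ℝ), μ {x | x j = t} = 0) (a : Fin n → ℝ)
    (h : ℝ) : ∀ᵐ x ∂μ, x ∈ cube a h → cube a h ∈ 𝓝 x := by
  filter_upwards [ae_forall_apply_ne hμ a, ae_forall_apply_ne hμ fun j => a j + h]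
    with x hlower hupper hx
  exact cube_mem_nhds hx hlower hupper

lemma eventually_mem_cube_iff {p : (Fin n → ℝ) × ℝ} (hlower : ∀ j, x j ≠ p.1 j)
    (hupper : ∀ j, x j ≠ p.1 j + p.2) :
    ∀ᶠ q in 𝓝 p, (x ∈ cube q.1 q.2 ↔ x ∈ cube p.1 p.2) := by
  have lower (j) : ∀ᶠ q : (Fin n → ℝ) × ℝ in 𝓝 p, (q.1 j ≤ x j ↔ p.1 j ≤ x j) := by
    have hcont : ContinuousAt (fun q : (Fin n → ℝ) × ℝ => q.1 j) p := by fun_prop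
    rcases (hlower j).lt_or_gt with hj | hj
    · filter_upwards [hcont.eventually_const_lt hj] with q hq
      exact iff_of_false hq.not_ge hj.not_ge
    · filter_upwards [hcont.eventually_lt_const hj] with q hq
      exact iff_of_true hq.le hj.le
  have upper (j) :
      ∀ᶠ q : (Fin n → ℝ) × ℝ in 𝓝 p, (x j ≤ q.1 j + q.2 ↔ x j ≤ p.1 j + p.2) := by
    have hcont : ContinuousAt (fun q : (Fin n → ℝ) × ℝ => q.1 j + q.2) p := by fun_prop
    rcases (hupper j).lt_or_gt with hj | hj
    · filter_upwards [hcont.eventually_const_lt hj] with q hq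
      exact iff_of_true hq.le hj.le
    · filter_upwards [hcont.eventually_lt_const hj] with q hq
      exact iff_of_false hq.not_ge hj.not_ge
  filter_upwards [eventually_all.2 lower, eventually_all.2 upper] with q hql hqu
  exact forall_congr' fun j => and_congr (hql j) (hqu j)

lemma eventually_cube_subset_cube (p : (Fin n → ℝ) × ℝ) :
    ∀ᶠ q in 𝓝 p, cube q.1 q.2 ⊆ cube (fun j => p.1 j - 1) (p.2 + 2) := by
  have lower (j) : ∀ᶠ q : (Fin n → ℝ) × ℝ in 𝓝 p, p.1 j - 1 < q.1 j :=
    (by fun_prop : ContinuousAt (fun q : (Fin n → ℝ) × ℝ => q.1 j) p).eventually_const_lt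
      (by linarith)
  have upper (j) : ∀ᶠ q : (Fin n → ℝ) × ℝ in 𝓝 p, q.1 j + q.2 < p.1 j + p.2 + 1 :=
    (by fun_prop : ContinuousAt (fun q : (Fin n → ℝ) × ℝ => q.1 j + q.2) p).eventually_lt_const
      (by linarith)
  filter_upwards [eventually_all.2 lower, eventually_all.2 upper] with q hql hqu y hy j
  constructor <;> linarith [hql j, hqu j, (hy j).1, (hy j).2]

lemma exists_small_innerCube_measure_le (hh : 0 < h) (hx : cube a h ∈ 𝓝 x)
    (hdensity : Tendsto (fun r => μ (E ∩ closedBall x r) / μ (closedBall x r)) (𝓝[>] 0) (𝓝 1)) :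
    ∃ r ∈ Ioc 0 (h / 2), μ (innerCube a h x r) ≤ 2 * μ (E ∩ innerCube a h x r) := by
  have hball : ∀ᶠ r in 𝓝[>] (0 : ℝ), closedBall x r ⊆ cube a h :=
    (eventually_closedBall_subset hx).filter_mono nhdsWithin_le_nhds
  have hsmall : ∀ᶠ r in 𝓝[>] (0 : ℝ), r ∈ Ioc 0 (h / 2) := Ioc_mem_nhdsGT (half_pos hh)
  have hhalf : ∀ᶠ r in 𝓝[>] (0 : ℝ), 2⁻¹ < μ (E ∩ closedBall x r) / μ (closedBall x r) :=
    hdensity.eventually_const_lt ENNReal.one_half_lt_one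
  obtain ⟨r, hsub, hr, hlt⟩ := (hball.and (hsmall.and hhalf)).exists
  refine ⟨r, hr, ?_⟩
  rw [innerCube_eq_closedBall hr.1.le hsub, ← ENNReal.inv_mul_le_iff two_ne_zero ofNat_ne_top]
  exact ENNReal.mul_le_of_le_div hlt.le

lemma measure_cube_ne_top (μ : Measure (Fin n → ℝ)) [IsLocallyFiniteMeasure μ]
    (a : Fin n → ℝ) (h : ℝ) : μ (cube a h) ≠ ∞ :=
  (isCompact_cube a h).measure_ne_top

variable [IsLocallyFiniteMeasure μ]

theorem continuous_measure_cube (hμ : ∀ (j : Fin n) (t : ℝ), μ {x | x j = t} = 0) :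
    Continuous fun p : (Fin n → ℝ) × ℝ => μ (cube p.1 p.2) := by
  refine continuous_iff_continuousAt.2 fun p => ?_
  refine tendsto_measure_of_ae_tendsto_indicator (𝓝 p) (measurableSet_cube _ _)
    (fun q => measurableSet_cube _ _) (measurableSet_cube _ _) (measure_cube_ne_top μ _ _)
    (eventually_cube_subset_cube p) ?_
  filter_upwards [ae_forall_apply_ne hμ p.1, ae_forall_apply_ne hμ fun j => p.1 j + p.2]
    with x hlower hupper
  exact eventually_mem_cube_iff hlower hupper

lemma continuous_measure_innerCube (hμ : ∀ (j : Fin n) (t : ℝ), μ {x | x j = t} = 0)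
    (a : Fin n → ℝ) (h : ℝ) (x : Fin n → ℝ) : Continuous fun r => μ (innerCube a h x r) :=
  (continuous_measure_cube hμ).comp
    ((continuous_innerCorner a h x).prodMk (continuous_const.mul continuous_id))

lemma continuous_measure_inter_innerCube (hμ : ∀ (j : Fin n) (t : ℝ), μ {x | x j = t} = 0)
    (E : Set (Fin n → ℝ)) (a : Fin n → ℝ) (h : ℝ) (x : Fin n → ℝ) :
    Continuous fun r => μ (E ∩ innerCube a h x r) := by
  have hE (j : Fin n) (t : ℝ) : μ.restrict E {x | x j = t} = 0 :=
    Measure.restrict_le_self.absolutelyContinuous (hμ j t)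
  simpa only [Measure.restrict_apply (measurableSet_innerCube _ _ _ _), inter_comm]
    using continuous_measure_innerCube hE a h x

/-- The radius `r` is admissible at `x`, relative to `cube a h`, if the inner cube of radius `r` at
`x` is half filled by `E`. -/
structure IsHalvingRadius (μ : Measure (Fin n → ℝ)) (E : Set (Fin n → ℝ)) (a : Fin n → ℝ) (h : ℝ)
    (x : Fin n → ℝ) (r : ℝ) : Prop where
  pos : 0 < r
  two_mul_le : 2 * r ≤ h
  measure_eq : 2 * μ (E ∩ innerCube a h x r) = μ (innerCube a h x r)

lemma exists_isHalvingRadius (hμ : ∀ (j : Fin n) (t : ℝ), μ {x | x j = t} = 0)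
    (hh : 0 < h) (hE : 2 * μ (E ∩ cube a h) ≤ μ (cube a h)) (hx : cube a h ∈ 𝓝 x)
    (hdensity : Tendsto (fun r => μ (E ∩ closedBall x r) / μ (closedBall x r)) (𝓝[>] 0) (𝓝 1)) :
    ∃ r, IsHalvingRadius μ E a h x r := by
  obtain ⟨r₀, hr₀, hsmall⟩ := exists_small_innerCube_measure_le hh hx hdensity
  rw [← innerCube_half_side a h x] at hE
  obtain ⟨r, hr, heq⟩ := isPreconnected_Icc.intermediate_value₂ (left_mem_Icc.2 hr₀.2)
    (right_mem_Icc.2 hr₀.2) (continuous_measure_innerCube hμ a h x).continuousOn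
    ((ENNReal.continuous_const_mul ofNat_ne_top).comp
      (continuous_measure_inter_innerCube hμ E a h x)).continuousOn hsmall hE
  exact ⟨r, hr₀.1.trans_le hr.1, by linarith [hr.2], heq.symm⟩

theorem exists_disjoint_halving_innerCube_families
    (hμ : ∀ (j : Fin n) (t : ℝ), μ {x | x j = t} = 0) (hh : 0 < h)
    (hE : 2 * μ (E ∩ cube a h) ≤ μ (cube a h)) :
    ∃ (r : (Fin n → ℝ) → ℝ) (T : CoverIndex n → Set (Fin n → ℝ)),
      (∀ p, ∀ x ∈ T p, IsHalvingRadius μ E a h x (r x)) ∧ (∀ p, (T p).Countable) ∧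
      (∀ p, (T p).PairwiseDisjoint fun x => innerCube a h x (r x)) ∧
      (E ∩ cube a h : Set (Fin n → ℝ)) ≤ᵐ[μ] ⋃ p, ⋃ x ∈ T p, innerCube a h x (r x) := by
  let S : Set (Fin n → ℝ) := {x ∈ cube a h | ∃ r, IsHalvingRadius μ E a h x r}
  have hS : ∀ x ∈ S, ∃ r, IsHalvingRadius μ E a h x r := fun x hx => hx.2
  choose! r hr using hS
  obtain ⟨T, hTS, hcount, hdisj, hcover⟩ := exists_disjoint_innerCube_families
    (fun x (hx : x ∈ S) => hx.1) (fun x hx => (hr x hx).pos) fun x hx => (hr x hx).two_mul_le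
  refine ⟨r, T, fun p x hx => hr x (hTS p hx), hcount, hdisj, ?_⟩
  have hdensity := ae_imp_of_ae_restrict (Besicovitch.ae_tendsto_measure_inter_div μ E)
  filter_upwards [hdensity, ae_cube_mem_nhds hμ a h] with x hxd hxn hx
  exact hcover ⟨hx.2, exists_isHalvingRadius hμ hh hE (hxn hx.2) (hxd hx.1)⟩

end Measure

section LIntegral

lemma support_tsub_subset {X : Type*} (g : X → ℝ≥0∞) (l : ℝ≥0∞) :
    (Function.support fun y => g y - l) ⊆ {y | l < g y} :=
  fun _ hy => tsub_pos_iff_lt.1 (pos_iff_ne_zero.2 hy)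

lemma setOf_mem_and_lt_abs_eq {X : Type*} (R : Set X) (g : X → ℝ) {l : ℝ} (hl : 0 ≤ l) :
    {y | y ∈ R ∧ l < |g y|} = {y | ENNReal.ofReal l < ‖g y‖ₑ} ∩ R := by
  ext y
  simp only [Real.enorm_eq_ofReal_abs, ENNReal.ofReal_lt_ofReal_iff_of_nonneg hl, mem_inter_iff,
    mem_ofPred_eq, and_comm]

variable {X : Type*} [MeasurableSpace X] {μ : Measure X}

lemma setLIntegral_biUnion_le {ι : Type*} {T : Set ι} {A : ι → Set X} {g : X → ℝ≥0∞} {K : ℝ≥0∞}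
    {ν : Measure X} (hT : T.Countable) (hdisj : T.PairwiseDisjoint A)
    (hA : ∀ i ∈ T, MeasurableSet (A i)) (hg : ∀ i ∈ T, ∫⁻ y in A i, g y ∂μ ≤ K * ν (A i)) :
    ∫⁻ y in ⋃ i ∈ T, A i, g y ∂μ ≤ K * ν (⋃ i ∈ T, A i) := by
  rw [lintegral_biUnion hT hA hdisj, measure_biUnion hT hdisj hA, ← ENNReal.tsum_mul_left]
  exact ENNReal.tsum_le_tsum fun i => hg i i.2

lemma setLIntegral_inter_of_support_subset {E R : Set X} {g : X → ℝ≥0∞} (hR : MeasurableSet R)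
    (hg : Function.support g ⊆ E) : ∫⁻ y in E ∩ R, g y ∂μ = ∫⁻ y in R, g y ∂μ := by
  rw [← Measure.restrict_restrict' hR, setLIntegral_eq_of_support_subset hg]

-- On `{l < g}` we have `g - l ≤ G + (d - l)`, and `d - l ≤ G` on the complement, which has the same
-- measure.
lemma lintegral_tsub_le_of_half_measure [IsFiniteMeasure μ] {g G : X → ℝ≥0∞} {d l : ℝ≥0∞}
    (hg : AEMeasurable g μ) (hgG : ∀ y, g y ≤ G y + d) (hdG : ∀ y, d ≤ G y + g y)
    (hhalf : 2 * μ {y | l < g y} = μ univ) :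
    ∫⁻ y, g y - l ∂μ ≤ ∫⁻ y, G y ∂μ := by
  set E := {y | l < g y}
  have hE : NullMeasurableSet E μ := nullMeasurableSet_lt aemeasurable_const hg
  have hcompl : μ E = μ Eᶜ := by
    rw [← measure_add_measure_compl₀ hE, two_mul] at hhalf
    exact (ENNReal.add_right_inj (measure_ne_top μ E)).1 hhalf
  have hrestrict : μ.restrict E + μ.restrict Eᶜ = μ := by
    simpa [compl_eq_univ_sdiff] using Measure.restrict_inter_add_sdiff₀ univ hE
  calc ∫⁻ y, g y - l ∂μ
      = ∫⁻ y in E, g y - l ∂μ := (setLIntegral_eq_of_support_subset (support_tsub_subset g l)).symm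
    _ ≤ ∫⁻ y in E, G y + (d - l) ∂μ :=
        lintegral_mono fun y => (tsub_le_tsub_right (hgG y) l).trans add_tsub_le_assoc
    _ = ∫⁻ y in E, G y ∂μ + ∫⁻ _ in Eᶜ, d - l ∂μ := by
        rw [lintegral_add_right _ measurable_const, setLIntegral_const, setLIntegral_const, hcompl]
    _ ≤ ∫⁻ y in E, G y ∂μ + ∫⁻ y in Eᶜ, G y ∂μ := by
        refine add_le_add le_rfl (lintegral_mono_ae ?_)
        filter_upwards [ae_restrict_mem₀ hE.compl] with y hy
        exact tsub_le_iff_right.2 ((hdG y).trans (add_le_add le_rfl (not_lt.1 hy)))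
    _ = ∫⁻ y, G y ∂μ := by rw [← lintegral_add_measure, hrestrict]

lemma setLIntegral_superlevel_le {R : Set X} (hR : MeasurableSet R) (g : X → ℝ≥0∞) (l : ℝ≥0∞) :
    ∫⁻ y in {y | l < g y} ∩ R, g y ∂μ ≤
      ∫⁻ y in R, g y - l ∂μ + l * μ ({y | l < g y} ∩ R) := by
  rw [← setLIntegral_inter_of_support_subset hR (support_tsub_subset g l), ← setLIntegral_const,
    ← lintegral_add_right _ measurable_const]
  exact lintegral_mono fun y => le_tsub_add

lemma setLIntegral_le_of_setLIntegral_support_le {R : Set X} (hR : MeasurableSet R)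
    {g : X → ℝ≥0∞} {K : ℝ≥0∞}
    (hg : ∫⁻ y in {y | 0 < g y} ∩ R, g y ∂μ ≤ K * μ ({y | 0 < g y} ∩ R)) :
    ∫⁻ y in R, g y ∂μ ≤ K * μ R := by
  have hsupport : Function.support g ⊆ {y | 0 < g y} := fun _ => pos_iff_ne_zero.2
  rw [setLIntegral_inter_of_support_subset hR hsupport] at hg
  exact hg.trans (by gcongr; exact inter_subset_right)

lemma setAverage_abs_sub_le_iff {R : Set X} {f : X → ℝ} {K : ℝ} (hR : μ R ≠ ∞)
    (hf : IntegrableOn f R μ) (hK : 0 ≤ K) (c : ℝ) :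
    (0 < μ R → ⨍ y in R, |f y - c| ∂μ ≤ K) ↔
      ∫⁻ y in R, ‖f y - c‖ₑ ∂μ ≤ ENNReal.ofReal K * μ R := by
  rcases eq_zero_or_pos (μ R) with hR₀ | hR₀
  · simp [hR₀, Measure.restrict_eq_zero.2 hR₀]
  · have hfc : IntegrableOn (fun y => |f y - c|) R μ := (hf.sub (integrableOn_const hR)).abs
    simp only [hR₀, forall_const, Real.enorm_eq_ofReal_abs]
    rw [← ENNReal.div_le_iff hR₀.ne' hR,
      ← ofReal_setAverage hfc (.of_forall fun y => abs_nonneg _), ENNReal.ofReal_le_ofReal_iff hK]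

end LIntegral

section MeanOscillation

variable {n : ℕ} {μ : Measure (Fin n → ℝ)} [IsLocallyFiniteMeasure μ] {a : Fin n → ℝ} {h : ℝ}
  {K : ℝ≥0∞}

theorem setLIntegral_cube_le_of_half_measure {E : Set (Fin n → ℝ)} {g : (Fin n → ℝ) → ℝ≥0∞}
    (hμ : ∀ (j : Fin n) (t : ℝ), μ {x | x j = t} = 0) (hh : 0 < h)
    (hE : 2 * μ (E ∩ cube a h) ≤ μ (cube a h)) (hgE : Function.support g ⊆ E)
    (hg : ∀ b s, 0 < s → cube b s ⊆ cube a h → 2 * μ (E ∩ cube b s) = μ (cube b s) →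
      ∫⁻ y in cube b s, g y ∂μ ≤ K * μ (E ∩ cube b s)) :
    ∫⁻ y in cube a h, g y ∂μ ≤ Fintype.card (CoverIndex n) * K * μ (E ∩ cube a h) := by
  obtain ⟨r, T, hr, hcount, hdisj, hcover⟩ := exists_disjoint_halving_innerCube_families hμ hh hE
  have hfamily (p) :
      ∫⁻ y in ⋃ x ∈ T p, innerCube a h x (r x), g y ∂μ ≤ K * μ (E ∩ cube a h) := by
    have hcube (x) (hx : x ∈ T p) : innerCube a h x (r x) ⊆ cube a h :=
      innerCube_subset (hr p x hx).two_mul_le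
    refine (setLIntegral_biUnion_le (ν := μ.restrict E) (K := K) (hcount p) (hdisj p)
      (fun x _ => measurableSet_innerCube _ _ _ _) fun x hx => ?_).trans ?_
    · rw [Measure.restrict_apply (measurableSet_innerCube _ _ _ _), inter_comm]
      exact hg _ _ (mul_pos two_pos (hr p x hx).pos) (hcube x hx) (hr p x hx).measure_eq
    · rw [inter_comm, ← Measure.restrict_apply (measurableSet_cube _ _)]
      gcongr
      exact iUnion₂_subset hcube
  calc ∫⁻ y in cube a h, g y ∂μ
      = ∫⁻ y in E ∩ cube a h, g y ∂μ :=
        (setLIntegral_inter_of_support_subset (measurableSet_cube _ _) hgE).symm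
    _ ≤ ∫⁻ y in ⋃ p, ⋃ x ∈ T p, innerCube a h x (r x), g y ∂μ := lintegral_mono_set' hcover
    _ ≤ ∑' p, ∫⁻ y in ⋃ x ∈ T p, innerCube a h x (r x), g y ∂μ := lintegral_iUnion_le _ _
    _ ≤ ∑' _ : CoverIndex n, K * μ (E ∩ cube a h) := ENNReal.tsum_le_tsum hfamily
    _ = Fintype.card (CoverIndex n) * K * μ (E ∩ cube a h) := by
        rw [tsum_fintype, Finset.sum_const, nsmul_eq_mul, Finset.card_univ, mul_assoc]

variable {F : Type*} [NormedAddCommGroup F] {f : (Fin n → ℝ) → F} {c : F}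

theorem setLIntegral_tsub_le_of_meanOscillation_le
    (hμ : ∀ (j : Fin n) (t : ℝ), μ {x | x j = t} = 0) (hh : 0 < h)
    (hf : AEStronglyMeasurable f (μ.restrict (cube a h)))
    (hc : ∫⁻ y in cube a h, ‖f y - c‖ₑ ∂μ ≤ K * μ (cube a h))
    (hK : ∀ b s, 0 < s → cube b s ⊆ cube a h →
      ∃ m, ∫⁻ y in cube b s, ‖f y - m‖ₑ ∂μ ≤ K * μ (cube b s)) (l : ℝ≥0∞) :
    ∫⁻ y in cube a h, ‖f y - c‖ₑ - l ∂μ ≤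
      (Fintype.card (CoverIndex n) + 1) * (2 * K) * μ ({y | l < ‖f y - c‖ₑ} ∩ cube a h) := by
  set E := {y | l < ‖f y - c‖ₑ}
  rcases le_total (2 * μ (E ∩ cube a h)) (μ (cube a h)) with hE | hE
  · refine (setLIntegral_cube_le_of_half_measure (K := 2 * K) hμ hh hE
      (support_tsub_subset _ l) fun b s hs hbs hhalf => ?_).trans (by gcongr; exact le_self_add)
    obtain ⟨m, hm⟩ := hK b s hs hbs
    have : IsFiniteMeasure (μ.restrict (cube b s)) :=
      isFiniteMeasure_restrict.2 (measure_cube_ne_top μ b s)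
    have hfb : AEStronglyMeasurable f (μ.restrict (cube b s)) := hf.mono_set hbs
    calc ∫⁻ y in cube b s, ‖f y - c‖ₑ - l ∂μ
        ≤ ∫⁻ y in cube b s, ‖f y - m‖ₑ ∂μ := by
          refine lintegral_tsub_le_of_half_measure (d := ‖m - c‖ₑ)
            (hfb.sub aestronglyMeasurable_const).enorm (fun y => ?_) (fun y => ?_) ?_
          · simpa only [edist_eq_enorm_sub] using edist_triangle (f y) m c
          · simpa only [edist_eq_enorm_sub, enorm_sub_rev m] using edist_triangle m (f y) c
          · rwa [Measure.restrict_apply' (measurableSet_cube b s), Measure.restrict_apply_univ]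
      _ ≤ K * μ (cube b s) := hm
      _ = 2 * K * μ (E ∩ cube b s) := by rw [← hhalf]; ring
  · calc ∫⁻ y in cube a h, ‖f y - c‖ₑ - l ∂μ
        ≤ ∫⁻ y in cube a h, ‖f y - c‖ₑ ∂μ := lintegral_mono fun y => tsub_le_self
      _ ≤ K * μ (cube a h) := hc
      _ ≤ K * (2 * μ (E ∩ cube a h)) := by gcongr
      _ = 1 * (2 * K) * μ (E ∩ cube a h) := by ring
      _ ≤ (Fintype.card (CoverIndex n) + 1) * (2 * K) * μ (E ∩ cube a h) := by
          gcongr; exact le_add_self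

theorem setLIntegral_superlevel_le_of_meanOscillation_le
    (hμ : ∀ (j : Fin n) (t : ℝ), μ {x | x j = t} = 0) (hh : 0 < h)
    (hf : AEStronglyMeasurable f (μ.restrict (cube a h)))
    (hc : ∫⁻ y in cube a h, ‖f y - c‖ₑ ∂μ ≤ K * μ (cube a h))
    (hK : ∀ b s, 0 < s → cube b s ⊆ cube a h →
      ∃ m, ∫⁻ y in cube b s, ‖f y - m‖ₑ ∂μ ≤ K * μ (cube b s)) (l : ℝ≥0∞) :
    ∫⁻ y in {y | l < ‖f y - c‖ₑ} ∩ cube a h, ‖f y - c‖ₑ ∂μ ≤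
      (l + (Fintype.card (CoverIndex n) + 1) * (2 * K)) *
        μ ({y | l < ‖f y - c‖ₑ} ∩ cube a h) := by
  rw [add_comm, add_mul]
  exact (setLIntegral_superlevel_le (measurableSet_cube a h) _ l).trans
    (add_le_add_left (setLIntegral_tsub_le_of_meanOscillation_le hμ hh hf hc hK l) _)

end MeanOscillation

/-- for a Radon measure `μ` on `ℝⁿ` giving no mass to hyperplanes orthogonal
to the coordinate axes, a locally `μ`-integrable `f` is in `BMO(μ)` iff there is `M ≥ 0`
with `∫_{{x ∈ Q : |f - f_Q| > λ}} |f - f_Q| dμ ≤ (λ + M) μ({x ∈ Q : |f - f_Q| > λ})` for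
all axis-parallel cubes `Q` of positive measure and all `λ ≥ 0`. -/
theorem stmt18 (n : ℕ) (μ : Measure (Fin n → ℝ)) [μ.Regular] [IsLocallyFiniteMeasure μ]
    (hplane : ∀ (j : Fin n) (t : ℝ), μ {x | x j = t} = 0)
    (f : (Fin n → ℝ) → ℝ)
    (hf : ∀ (a : Fin n → ℝ) (h : ℝ), 0 < h → IntegrableOn f (cube a h) μ) :
    (∃ K : ℝ, ∀ (a : Fin n → ℝ) (h : ℝ), 0 < h → 0 < μ (cube a h) →
      (⨍ y in cube a h, |f y - meanOn μ f (cube a h)| ∂μ) ≤ K) ↔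
    (∃ M : ℝ, 0 ≤ M ∧ ∀ (a : Fin n → ℝ) (h : ℝ), 0 < h → 0 < μ (cube a h) → ∀ l : ℝ, 0 ≤ l →
      ∫⁻ y in {y | y ∈ cube a h ∧ l < |f y - meanOn μ f (cube a h)|},
          ENNReal.ofReal |f y - meanOn μ f (cube a h)| ∂μ ≤
        ENNReal.ofReal (l + M) *
          μ {y | y ∈ cube a h ∧ l < |f y - meanOn μ f (cube a h)|}) := by
  have hosc (a : Fin n → ℝ) (h : ℝ) (hh : 0 < h) {K : ℝ} (hK : 0 ≤ K) :=
    setAverage_abs_sub_le_iff (measure_cube_ne_top μ a h) (hf a h hh) hK (meanOn μ f (cube a h))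
  constructor
  · rintro ⟨K, hK⟩
    have hbmo (a : Fin n → ℝ) (h : ℝ) (hh : 0 < h) :
        ∫⁻ y in cube a h, ‖f y - meanOn μ f (cube a h)‖ₑ ∂μ ≤
          ENNReal.ofReal |K| * μ (cube a h) :=
      (hosc a h hh (abs_nonneg K)).1 fun h₀ => (hK a h hh h₀).trans (le_abs_self K)
    let M : ℝ≥0∞ := (Fintype.card (CoverIndex n) + 1) * (2 * ENNReal.ofReal |K|)
    have hM : M ≠ ∞ := by finiteness
    refine ⟨M.toReal, toReal_nonneg, fun a h hh _ l hl => ?_⟩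
    simp only [setOf_mem_and_lt_abs_eq _ _ hl, ← Real.enorm_eq_ofReal_abs,
      ENNReal.ofReal_add hl toReal_nonneg, ofReal_toReal hM]
    exact setLIntegral_superlevel_le_of_meanOscillation_le hplane hh
      (hf a h hh).aestronglyMeasurable (hbmo a h hh) (fun b s hs _ => ⟨_, hbmo b s hs⟩) _
  · rintro ⟨M, hM, hlevel⟩
    refine ⟨M, fun a h hh h₀ => (hosc a h hh hM).2 ?_ h₀⟩
    refine setLIntegral_le_of_setLIntegral_support_le (measurableSet_cube a h) ?_
    simpa only [setOf_mem_and_lt_abs_eq _ _ le_rfl, ← Real.enorm_eq_ofReal_abs, ofReal_zero,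
      zero_add] using hlevel a h hh h₀ 0 le_rfl
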